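/- arXiv:1003.5176 — 6 statements merged into one kernel-verified Lean document; each statement's English description precedes it below -/
import Mathlib

section
/- Let X be a non-reflexive real Banach space. Then there exists a convex subset A ⊆ X* such that the weak* derived set A^(1) is strictly contained in the weak* closure of A. -/
open NormedSpace

/-- The weak* derived set of a subset of the dual. -/
noncomputable def wStarDerived {X : Type*} [NormedAddCommGroup X] [NormedSpace ℝ X]
    (A : Set (StrongDual ℝ X)) : Set (StrongDual ℝ X) :=
  ⋃ n : ℕ, {f : StrongDual ℝ X |
    StrongDual.toWeakDual f ∈ closure (StrongDual.toWeakDual '' (A ∩ {g : StrongDual ℝ X | ‖g‖ ≤ n}))}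

/-- The weak* closure. -/
noncomputable def wStarClosure {X : Type*} [NormedAddCommGroup X] [NormedSpace ℝ X]
    (A : Set (StrongDual ℝ X)) : Set (StrongDual ℝ X) :=
  {f : StrongDual ℝ X | StrongDual.toWeakDual f ∈ closure (StrongDual.toWeakDual '' A)}

/-- Quasi-reflexivity. -/
def QuasiReflexive (X : Type*) [NormedAddCommGroup X] [NormedSpace ℝ X] : Prop :=
  FiniteDimensional ℝ
    (StrongDual ℝ (StrongDual ℝ X) ⧸ LinearMap.range ((inclusionInDoubleDual ℝ X) : X →ₗ[ℝ] StrongDual ℝ (StrongDual ℝ X)))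

/-- Restriction map to a subspace. -/
noncomputable def restrictMap {X : Type*} [NormedAddCommGroup X] [NormedSpace ℝ X]
    (Z : Submodule ℝ X) (f : StrongDual ℝ X) : StrongDual ℝ Z :=
  f.comp Z.subtypeL

/-!
Choose `F` in the bidual outside the image of `X` and `x ≠ 0` in `X`, and let `A` be the set of
functionals `f` with `0 < f x` and `1 / f x ≤ F f`, an epigraph of the convex function `1 / t`. On a
bounded part of `A` the values of `F` are bounded above, so those of `f x` are bounded away from `0`
and remain positive in weak* limits. But `F` is not weak* continuous, so each of its level sets is
weak* dense; hence the condition on `F` disappears in the weak* closure of `A`, which is the whole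
half-space `0 ≤ f x`.
-/

open Set

section LevelSets

variable {𝕜 E : Type*} [NontriviallyNormedField 𝕜] [AddCommGroup E] [Module 𝕜 E]
  [TopologicalSpace E] [IsTopologicalAddGroup E] [ContinuousSMul 𝕜 E]

theorem dense_preimage_singleton_of_not_continuous {q : E →ₗ[𝕜] 𝕜} (hq : ¬ Continuous q) (c : 𝕜) :
    Dense (q ⁻¹' {c}) := by
  have dense_ker : Dense (q.ker : Set E) :=
    q.isClosed_or_dense_ker.resolve_left (mt q.continuous_iff_isClosed_ker.2 hq)
  have q_ne_zero : q ≠ 0 := by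
    rintro rfl
    exact hq continuous_zero
  obtain ⟨e, he⟩ := q.surjective q_ne_zero c
  have level_eq : q ⁻¹' {c} = (· - e) ⁻¹' (q.ker : Set E) := by
    ext v
    simp [he, sub_eq_zero]
  exact level_eq ▸ dense_ker.preimage (Homeomorph.subRight e).isOpenMap

end LevelSets

/-- The region above a branch of a hyperbola in the coordinates `p` and `q`: the preimage under
`(p, q)` of the epigraph of `t ↦ 1 / t` on `t > 0`. -/
def hyperbolicRegion {E : Type*} [AddCommGroup E] [Module ℝ E] (p q : E →ₗ[ℝ] ℝ) : Set E :=
  {v | 0 < p v ∧ (p v)⁻¹ ≤ q v}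

namespace hyperbolicRegion

variable {E : Type*} [AddCommGroup E] [Module ℝ E] (p q : E →ₗ[ℝ] ℝ)

theorem image_linearEquiv {E' : Type*} [AddCommGroup E'] [Module ℝ E'] (e : E ≃ₗ[ℝ] E') :
    e '' hyperbolicRegion p q = hyperbolicRegion (p ∘ₗ e.symm) (q ∘ₗ e.symm) :=
  e.image_eq_preimage_symm _

theorem convex : Convex ℝ (hyperbolicRegion p q) := by
  have epigraph_convex : Convex ℝ {z : ℝ × ℝ | z.1 ∈ Ioi 0 ∧ z.1⁻¹ ≤ z.2} := by
    simpa only [zpow_neg_one] using (convexOn_zpow (𝕜 := ℝ) (-1)).convex_epigraph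
  exact epigraph_convex.linear_preimage (p.prod q)

variable {p q} [TopologicalSpace E]

theorem closure_inter_le_subset (hp : Continuous p) (c : ℝ) :
    closure (hyperbolicRegion p q ∩ {v | q v ≤ c}) ⊆ {v | 0 < p v} := by
  have one_le_mul_abs : closure (hyperbolicRegion p q ∩ {v | q v ≤ c}) ⊆ {v | 1 ≤ p v * |c|} := by
    refine closure_minimal ?_ (isClosed_le continuous_const (hp.mul continuous_const))
    rintro v ⟨⟨hpv, hqv⟩, hvc⟩
    exact (inv_le_iff_one_le_mul₀' hpv).1 (hqv.trans (hvc.trans (le_abs_self c)))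
  intro v hv
  exact pos_of_mul_pos_left (one_pos.trans_le (one_le_mul_abs hv)) (abs_nonneg c)

variable [IsTopologicalAddGroup E] [ContinuousSMul ℝ E]

theorem setOf_pos_subset_closure (hp : Continuous p) (hq : ¬ Continuous q) :
    {v | 0 < p v} ⊆ closure (hyperbolicRegion p q) := by
  intro v hv
  rw [mem_closure_iff]
  intro U hU hvU
  obtain ⟨t, ht, htv⟩ := exists_between (mem_ofPred.1 hv)
  have near_isOpen : IsOpen (U ∩ {w | t < p w}) := hU.inter (isOpen_lt continuous_const hp)
  obtain ⟨w, ⟨hwU, htw⟩, hqw : q w = t⁻¹⟩ :=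
    (dense_preimage_singleton_of_not_continuous hq t⁻¹).inter_open_nonempty _ near_isOpen
      ⟨v, hvU, htv⟩
  exact ⟨w, hwU, ht.trans htw, hqw ▸ inv_anti₀ ht htw.le⟩

theorem closure_eq (hp : Continuous p) (hp₀ : p ≠ 0) (hq : ¬ Continuous q) :
    closure (hyperbolicRegion p q) = {v | 0 ≤ p v} := by
  have p_isOpenMap : IsOpenMap p :=
    ContinuousLinearMap.isOpenMap_of_ne_zero (⟨p, hp⟩ : StrongDual ℝ E)
      fun h ↦ hp₀ (congrArg ContinuousLinearMap.toLinearMap h)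
  have closure_pos : closure {v | 0 < p v} = {v | 0 ≤ p v} := by
    simpa only [closure_Ioi] using!
      (p_isOpenMap.preimage_closure_eq_closure_preimage hp (Ioi 0)).symm
  rw [← closure_pos]
  exact (closure_mono fun v hv ↦ hv.1).antisymm
    (closure_minimal (setOf_pos_subset_closure hp hq) isClosed_closure)

end hyperbolicRegion

section DoubleDual

variable {𝕜 X : Type*} [NontriviallyNormedField 𝕜] [SeminormedAddCommGroup X] [NormedSpace 𝕜 X]

theorem nontrivial_of_not_surjective_inclusionInDoubleDual
    (hX : ¬ Function.Surjective (inclusionInDoubleDual 𝕜 X)) : Nontrivial X := by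
  by_contra X_trivial
  rw [not_nontrivial_iff_subsingleton] at X_trivial
  exact hX fun F ↦ ⟨0, Subsingleton.elim _ _⟩

/-- The element `F` of the double dual as a linear functional on the dual with its weak*
topology, where it need not be continuous. -/
noncomputable def weakStarFunctional (F : StrongDual 𝕜 (StrongDual 𝕜 X)) : WeakDual 𝕜 X →ₗ[𝕜] 𝕜 :=
  F.toLinearMap ∘ₗ StrongDual.toWeakDual.symm.toLinearMap

theorem continuous_weakStarFunctional_iff {F : StrongDual 𝕜 (StrongDual 𝕜 X)} :
    Continuous (weakStarFunctional F) ↔ F ∈ range (inclusionInDoubleDual 𝕜 X) := by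
  constructor
  · intro hF
    let weakF : StrongDual 𝕜 (WeakBilin (topDualPairing 𝕜 X)) := ⟨F.toLinearMap, hF⟩
    obtain ⟨x, hx⟩ := LinearMap.dualEmbedding_surjective (topDualPairing 𝕜 X) weakF
    exact ⟨x, ContinuousLinearMap.ext fun f ↦ DFunLike.congr_fun hx f⟩
  · rintro ⟨x, rfl⟩
    exact WeakDual.eval_continuous x

end DoubleDual

section Dual

variable {X : Type*} [NormedAddCommGroup X] [NormedSpace ℝ X]

theorem wStarClosure_hyperbolicRegion {x : X} (hx : x ≠ 0) {F : StrongDual ℝ (StrongDual ℝ X)}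
    (hF : F ∉ range (inclusionInDoubleDual ℝ X)) :
    wStarClosure (hyperbolicRegion (inclusionInDoubleDual ℝ X x).toLinearMap F.toLinearMap) =
      {f | 0 ≤ f x} := by
  have eval_continuous : Continuous (weakStarFunctional (inclusionInDoubleDual ℝ X x)) :=
    continuous_weakStarFunctional_iff.2 ⟨x, rfl⟩
  have eval_ne_zero : weakStarFunctional (inclusionInDoubleDual ℝ X x) ≠ 0 := by
    obtain ⟨f, hf⟩ := SeparatingDual.exists_ne_zero (R := ℝ) hx
    exact fun h ↦ hf (LinearMap.congr_fun h (StrongDual.toWeakDual f))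
  have F_not_continuous : ¬ Continuous (weakStarFunctional F) :=
    mt continuous_weakStarFunctional_iff.1 hF
  have closure_image := hyperbolicRegion.closure_eq eval_continuous eval_ne_zero F_not_continuous
  rw [weakStarFunctional, weakStarFunctional, ← hyperbolicRegion.image_linearEquiv] at closure_image
  exact congrArg (StrongDual.toWeakDual ⁻¹' ·) closure_image

theorem wStarDerived_hyperbolicRegion_subset (x : X) (F : StrongDual ℝ (StrongDual ℝ X)) :
    wStarDerived (hyperbolicRegion (inclusionInDoubleDual ℝ X x).toLinearMap F.toLinearMap) ⊆
      {f | 0 < f x} := by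
  have eval_continuous : Continuous (weakStarFunctional (inclusionInDoubleDual ℝ X x)) :=
    continuous_weakStarFunctional_iff.2 ⟨x, rfl⟩
  refine iUnion_subset fun n f hf ↦ ?_
  have bounded_subset : StrongDual.toWeakDual '' (hyperbolicRegion
      (inclusionInDoubleDual ℝ X x).toLinearMap F.toLinearMap ∩ {g | ‖g‖ ≤ n}) ⊆
      hyperbolicRegion (weakStarFunctional (inclusionInDoubleDual ℝ X x)) (weakStarFunctional F) ∩
        {w | weakStarFunctional F w ≤ ‖F‖ * n} := by
    rintro _ ⟨g, ⟨hg, hgn⟩, rfl⟩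
    exact ⟨hg, (le_abs_self _).trans (F.le_opNorm_of_le hgn)⟩
  exact hyperbolicRegion.closure_inter_le_subset eval_continuous _ (closure_mono bounded_subset hf)

end Dual

theorem stmt3_general (X : Type*) [NormedAddCommGroup X] [NormedSpace ℝ X]
    (hnr : ¬ Function.Surjective (inclusionInDoubleDual ℝ X)) :
    ∃ A : Set (StrongDual ℝ X), Convex ℝ A ∧ wStarDerived A ⊂ wStarClosure A := by
  have := nontrivial_of_not_surjective_inclusionInDoubleDual hnr
  obtain ⟨x, hx⟩ := exists_ne (0 : X)
  obtain ⟨F, hF⟩ := not_forall.1 hnr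
  refine ⟨hyperbolicRegion (inclusionInDoubleDual ℝ X x).toLinearMap F.toLinearMap,
    hyperbolicRegion.convex _ _, ?_⟩
  have halfSpace_ssubset : {f : StrongDual ℝ X | 0 < f x} ⊂ {f | 0 ≤ f x} :=
    ssubset_iff_exists.2 ⟨fun _ ↦ le_of_lt (α := ℝ), 0, le_refl (0 : ℝ), lt_irrefl (0 : ℝ)⟩
  calc
    wStarDerived _ ⊆ {f | 0 < f x} := wStarDerived_hyperbolicRegion_subset x F
    _ ⊂ {f | 0 ≤ f x} := halfSpace_ssubset
    _ = wStarClosure _ := (wStarClosure_hyperbolicRegion hx hF).symm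

/-- If $X$ is a non-reflexive Banach space, then there is a convex set $A \subset X^*$
whose weak* derived set is strictly contained in the weak* closure of $A$. -/
theorem stmt3 (X : Type*) [NormedAddCommGroup X] [NormedSpace ℝ X] [CompleteSpace X]
    (hnr : ¬ Function.Surjective (inclusionInDoubleDual ℝ X)) :
    ∃ A : Set (StrongDual ℝ X), Convex ℝ A ∧ wStarDerived A ⊂ wStarClosure A :=
  stmt3_general X hnr
end

section
/- Let Z be a closed linear subspace of a real Banach space X, let E : Z → X be the natural isometric embedding, and let E* : X* → Z* be the adjoint restriction map. Let A ⊆ Z* and set D = (E*)^{-1}(A) ⊆ X*. Then D^(1) = (E*)^{-1}(A^(1)), where D^(1) is the weak* derived set computed in X* and A^(1) is the weak* derived set computed in Z*. -/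
open NormedSpace

/- A continuous linear map `E` has a weak*-continuous adjoint `E*` which preserves boundedness, so
`E*` carries weak* limits of bounded nets in `(E*)⁻¹(A)` to such limits in `A`. Conversely, suppose
that `E*` is surjective, as is the case for an inclusion by Hahn–Banach, and that `E* f` is the limit
of a bounded net in `A`. By the open mapping theorem the net lifts to a bounded net in `(E*)⁻¹(A)`;
by Banach–Alaoglu the lifted net has a cluster point `g`, and `E* g = E* f`. Translating by
`f - g ∈ ker E*` leaves `(E*)⁻¹(A)` invariant and moves `g` to `f`. -/

open Bornology Function Set

theorem image_closure_of_isBounded_weakDual {𝕜 X S : Type*} [NontriviallyNormedField 𝕜]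
    [ProperSpace 𝕜] [SeminormedAddCommGroup X] [NormedSpace 𝕜 X] [TopologicalSpace S] [T2Space S]
    {B : Set (WeakDual 𝕜 X)} (hB : IsBounded B) {Φ : WeakDual 𝕜 X → S} (hΦ : Continuous Φ) :
    Φ '' closure B = closure (Φ '' B) :=
  image_closure_of_isCompact
    (WeakDual.isCompact_of_bounded_of_closed (WeakDual.isBounded_closure hB) isClosed_closure)
    hΦ.continuousOn

section WeakStarContinuous

variable {𝕜 X Y : Type*} [NontriviallyNormedField 𝕜] [SeminormedAddCommGroup X] [NormedSpace 𝕜 X]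
  [SeminormedAddCommGroup Y] [NormedSpace 𝕜 Y]

/-- Continuity for the weak* topologies of a map between dual spaces, where the map is typed on
the normed duals because those carry the bounded sets entering `wStarDerived`. -/
def WeakStarContinuous (φ : StrongDual 𝕜 X → StrongDual 𝕜 Y) : Prop :=
  Continuous (StrongDual.toWeakDual ∘ φ ∘ WeakDual.toStrongDual)

theorem weakStarContinuous_add_const (k : StrongDual 𝕜 X) : WeakStarContinuous (· + k) :=
  continuous_add_const (StrongDual.toWeakDual k)

/-- The adjoint `E* : X* → Y*`, `f ↦ f ∘ E`, of a continuous linear map `E : Y → X`, as a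
continuous linear map between the normed duals. -/
def strongDualMap (E : Y →L[𝕜] X) : StrongDual 𝕜 X →L[𝕜] StrongDual 𝕜 Y :=
  E.precomp 𝕜

theorem weakStarContinuous_strongDualMap (E : Y →L[𝕜] X) :
    WeakStarContinuous (strongDualMap E) :=
  WeakDual.continuous_of_continuous_eval fun y ↦ WeakDual.eval_continuous (E y)

end WeakStarContinuous

theorem surjective_strongDualMap_subtypeL {𝕜 X : Type*} [RCLike 𝕜] [SeminormedAddCommGroup X]
    [NormedSpace 𝕜 X] (Z : Submodule 𝕜 X) : Surjective (strongDualMap Z.subtypeL) := by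
  intro f
  obtain ⟨g, hg, -⟩ := exists_extension_norm_eq Z f
  exact ⟨g, ContinuousLinearMap.ext hg⟩

section WeakStarDerived

variable {X Y : Type*} [NormedAddCommGroup X] [NormedSpace ℝ X]
  [NormedAddCommGroup Y] [NormedSpace ℝ Y]

theorem mem_wStarDerived_iff_exists_isBounded {A : Set (StrongDual ℝ X)} {f : StrongDual ℝ X} :
    f ∈ wStarDerived A ↔
      ∃ B ⊆ A, IsBounded B ∧ StrongDual.toWeakDual f ∈ closure (StrongDual.toWeakDual '' B) := by
  simp only [wStarDerived, mem_iUnion, mem_ofPred_eq]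
  constructor
  · rintro ⟨n, hf⟩
    refine ⟨_, inter_subset_left, ?_, hf⟩
    exact isBounded_iff_forall_norm_le.2 ⟨n, fun g hg ↦ hg.2⟩
  · rintro ⟨B, hBA, hB, hf⟩
    obtain ⟨r, hr⟩ := isBounded_iff_forall_norm_le.1 hB
    obtain ⟨n, hn⟩ := exists_nat_ge r
    have hsub : B ⊆ A ∩ {g : StrongDual ℝ X | ‖g‖ ≤ n} :=
      fun g hg ↦ ⟨hBA hg, (hr g hg).trans hn⟩
    exact ⟨n, closure_mono (image_mono hsub) hf⟩

variable {φ : StrongDual ℝ X → StrongDual ℝ Y}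

theorem WeakStarContinuous.mapsTo_wStarDerived (hφ : WeakStarContinuous φ)
    (hbdd : ∀ B, IsBounded B → IsBounded (φ '' B))
    {A : Set (StrongDual ℝ X)} {C : Set (StrongDual ℝ Y)} (hAC : MapsTo φ A C) :
    MapsTo φ (wStarDerived A) (wStarDerived C) := by
  intro f hf
  obtain ⟨B, hBA, hB, hfB⟩ := mem_wStarDerived_iff_exists_isBounded.1 hf
  refine mem_wStarDerived_iff_exists_isBounded.2
    ⟨φ '' B, (hAC.mono_left hBA).image_subset, hbdd B hB,
      map_mem_closure (f := StrongDual.toWeakDual ∘ φ ∘ WeakDual.toStrongDual) hφ hfB ?_⟩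
  rintro _ ⟨g, hg, rfl⟩
  exact mem_image_of_mem _ (mem_image_of_mem φ hg)

theorem add_mem_wStarDerived {A : Set (StrongDual ℝ X)} {f k : StrongDual ℝ X}
    (hA : MapsTo (· + k) A A) (hf : f ∈ wStarDerived A) : f + k ∈ wStarDerived A :=
  (weakStarContinuous_add_const k).mapsTo_wStarDerived
    (fun _ hB ↦ (LipschitzWith.id.add (.const k)).isBounded_image hB) hA hf

theorem WeakStarContinuous.surjOn_wStarDerived_preimage (hφ : WeakStarContinuous φ)
    (hlift : ∀ C, IsBounded C → ∃ B, IsBounded B ∧ φ '' B = C) (A : Set (StrongDual ℝ Y)) :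
    SurjOn φ (wStarDerived (φ ⁻¹' A)) (wStarDerived A) := by
  intro a ha
  obtain ⟨C, hCA, hC, haC⟩ := mem_wStarDerived_iff_exists_isBounded.1 ha
  obtain ⟨B, hB, rfl⟩ := hlift C hC
  have himage : StrongDual.toWeakDual '' (φ '' B) =
      (StrongDual.toWeakDual ∘ φ ∘ WeakDual.toStrongDual) '' (StrongDual.toWeakDual '' B) := by
    simp only [image_image, comp_apply, StrongDual.toStrongDual_toWeakDual]
  have hBweak : IsBounded (StrongDual.toWeakDual '' B) := by
    rw [LinearEquiv.image_eq_preimage_symm]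
    exact WeakDual.isBounded_toStrongDual_preimage_iff_isBounded.2 hB
  rw [himage, ← image_closure_of_isBounded_weakDual hBweak hφ] at haC
  obtain ⟨g, hg, hga⟩ := haC
  exact ⟨g.toStrongDual, mem_wStarDerived_iff_exists_isBounded.2
    ⟨B, image_subset_iff.1 hCA, hB, hg⟩, StrongDual.toWeakDual.injective hga⟩

end WeakStarDerived

theorem exists_isBounded_image_eq {𝕜 F G : Type*} [NontriviallyNormedField 𝕜]
    [NormedAddCommGroup F] [NormedSpace 𝕜 F] [CompleteSpace F]
    [NormedAddCommGroup G] [NormedSpace 𝕜 G] [CompleteSpace G]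
    {T : F →L[𝕜] G} (hT : Surjective T) {C : Set G} (hC : IsBounded C) :
    ∃ B, IsBounded B ∧ T '' B = C := by
  obtain ⟨K, hK, hlift⟩ := T.exists_preimage_norm_le hT
  choose s hs hsnorm using hlift
  obtain ⟨r, hr⟩ := isBounded_iff_forall_norm_le.1 hC
  refine ⟨s '' C, isBounded_iff_forall_norm_le.2 ⟨K * r, ?_⟩, ?_⟩
  · rintro _ ⟨y, hy, rfl⟩
    exact (hsnorm y).trans (by gcongr; exact hr y hy)
  · rw [image_image]
    simp only [hs, image_id']

theorem stmt5_general {X Z : Type*} [NormedAddCommGroup X] [NormedSpace ℝ X]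
    [NormedAddCommGroup Z] [NormedSpace ℝ Z] (E : Z →L[ℝ] X) (hE : Surjective (strongDualMap E))
    (A : Set (StrongDual ℝ Z)) :
    wStarDerived (strongDualMap E ⁻¹' A) = strongDualMap E ⁻¹' wStarDerived A := by
  have hcont := weakStarContinuous_strongDualMap E
  apply Subset.antisymm
  · exact hcont.mapsTo_wStarDerived (fun _ ↦ (strongDualMap E).lipschitz.isBounded_image)
      (mapsTo_preimage _ A)
  · intro f hf
    obtain ⟨g, hg, hgf⟩ :=
      hcont.surjOn_wStarDerived_preimage (fun _ ↦ exists_isBounded_image_eq hE) A hf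
    have hker : strongDualMap E (f - g) = 0 := by rw [map_sub, hgf, sub_self]
    have hinvariant : MapsTo (· + (f - g)) (strongDualMap E ⁻¹' A) (strongDualMap E ⁻¹' A) := by
      intro h hh
      rwa [mem_preimage, map_add, hker, add_zero]
    simpa only [add_sub_cancel] using add_mem_wStarDerived hinvariant hg

/-- For a closed subspace $Z \subset X$ with restriction map $E^* : X^* \to Z^*$ and
$A \subset Z^*$, $D = (E^*)^{-1}(A)$, one has $D^{(1)} = (E^*)^{-1}(A^{(1)})$. -/
theorem stmt5 (X : Type*) [NormedAddCommGroup X] [NormedSpace ℝ X] [CompleteSpace X]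
    (Z : Submodule ℝ X) (hZ : IsClosed (Z : Set X)) (A : Set (StrongDual ℝ Z)) :
    wStarDerived (restrictMap Z ⁻¹' A) = restrictMap Z ⁻¹' (wStarDerived A) :=
  stmt5_general Z.subtypeL (surjective_strongDualMap_subtypeL Z) A
end

section
/- Let Z be a closed linear subspace of a real Banach space X, let E* : X* → Z* be the restriction map, let A ⊆ Z* and D = (E*)^{-1}(A) ⊆ X*. If the weak* derived set A^(1) (computed in Z*) is strictly contained in the weak* closure of A in Z*, then the weak* derived set D^(1) (computed in X*) is strictly contained in the weak* closure of D in X*. -/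
open NormedSpace

/-!
The restriction map `E* : X* → Z*` is weak*-continuous and norm-contractive, so it maps `D^(1)` into
`A^(1)`. It is also weak*-open: if `P : X → Z` is a (possibly discontinuous) linear projection and
`h ∈ Z*` is weak*-close to `E* f`, then the functional `f + (h - E* f) ∘ P` extends `h` and is close
to `f` at any finite set of points, and since it is continuous on `Z`, Hahn-Banach gives an element
of `X*` with the same values on `Z` and on those points. Hence the weak* closure of `D` is the
preimage of that of `A`, and any `f` extending a point of the closure of `A` outside `A^(1)` lies
in the closure of `D` but outside `D^(1)`.
-/

open Topology

section FiniteDimensionalExtension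

theorem continuous_of_continuous_domRestrict_of_finiteDimensional_quotient
    {𝕜 E F : Type*} [NontriviallyNormedField 𝕜] [CompleteSpace 𝕜]
    [AddCommGroup E] [TopologicalSpace E] [IsTopologicalAddGroup E] [Module 𝕜 E]
    [ContinuousSMul 𝕜 E] [AddCommGroup F] [TopologicalSpace F] [IsTopologicalAddGroup F]
    [Module 𝕜 F] [ContinuousSMul 𝕜 F] {s : Submodule 𝕜 E} (hs : IsClosed (s : Set E))
    [FiniteDimensional 𝕜 (E ⧸ s)] {f : E →ₗ[𝕜] F} (hf : Continuous (f.domRestrict s)) :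
    Continuous f := by
  obtain ⟨p, hp⟩ := Submodule.ClosedComplemented.of_finiteDimensional_quotient hs
  let r : E →ₗ[𝕜] F := f - f.domRestrict s ∘ₗ p.toLinearMap
  have hr : s ≤ r.ker := fun x hx => by
    simp [r, hp ⟨x, hx⟩]
  have hr_cont : Continuous r :=
    (s.liftQ r hr).continuous_of_finiteDimensional.comp s.mkQL.continuous
  have hf_eq : ⇑f = fun x => f.domRestrict s (p x) + r x := by
    ext x
    simp [r]
  rw [hf_eq]
  exact (hf.comp p.continuous).add hr_cont

theorem exists_strongDual_eqOn_sup_of_finiteDimensional {𝕜 E : Type*} [RCLike 𝕜] [AddCommGroup E]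
    [TopologicalSpace E] [Module 𝕜 E] [PolynormableSpace 𝕜 E] {s : Submodule 𝕜 E}
    (hs : IsClosed (s : Set E)) (t : Submodule 𝕜 E) [FiniteDimensional 𝕜 t] {φ : E →ₗ[𝕜] 𝕜}
    (hφ : Continuous (φ.domRestrict s)) :
    ∃ g : StrongDual 𝕜 E, ∀ x ∈ t ⊔ s, g x = φ x := by
  have := (PolynormableSpace.withSeminorms 𝕜 E).topologicalAddGroup
  have := (PolynormableSpace.withSeminorms 𝕜 E).continuousSMul
  let s' : Submodule 𝕜 ↥(t ⊔ s) := s.comap (t ⊔ s).subtype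
  have : FiniteDimensional 𝕜 (↥(t ⊔ s) ⧸ s') :=
    (LinearMap.quotientInfEquivSupQuotient t s).finiteDimensional
  have hs' : IsClosed (s' : Set ↥(t ⊔ s)) := hs.preimage continuous_subtype_val
  have hφs' : Continuous ((φ.domRestrict (t ⊔ s)).domRestrict s') :=
    hφ.comp (f := fun x : s' => (⟨x, x.2⟩ : s)) (by fun_prop)
  obtain ⟨g, hg⟩ := StrongDual.exists_extension (t ⊔ s)
    ⟨_, continuous_of_continuous_domRestrict_of_finiteDimensional_quotient hs' hφs'⟩
  exact ⟨g, fun x hx => hg ⟨x, hx⟩⟩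

end FiniteDimensionalExtension

section WeakDual

variable {𝕜 E : Type*}

/-- The adjoint `T* : E* → F*` of a continuous linear map `T : F → E`, as a continuous linear map
for the weak* topologies. -/
noncomputable def weakDualMap {F : Type*} [CommSemiring 𝕜] [TopologicalSpace 𝕜] [ContinuousAdd 𝕜]
    [ContinuousConstSMul 𝕜 𝕜] [AddCommMonoid E] [Module 𝕜 E] [TopologicalSpace E]
    [AddCommMonoid F] [Module 𝕜 F] [TopologicalSpace F] (T : F →L[𝕜] E) :
    WeakDual 𝕜 E →L[𝕜] WeakDual 𝕜 F where
  toFun f := StrongDual.toWeakDual ((WeakDual.toStrongDual f).comp T)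
  map_add' _ _ := rfl
  map_smul' _ _ := rfl
  cont := WeakDual.continuous_of_continuous_eval fun y => WeakDual.eval_continuous (T y)

variable [RCLike 𝕜] [AddCommGroup E] [TopologicalSpace E] [Module 𝕜 E] [PolynormableSpace 𝕜 E]
  {s : Submodule 𝕜 E}

theorem exists_weakDualMap_subtypeL_eq_and_eqOn_finset (hs : IsClosed (s : Set E)) (I : Finset E)
    {φ : E →ₗ[𝕜] 𝕜} {h : WeakDual 𝕜 s} (hφ : ∀ z : s, φ z = h z) :
    ∃ g : WeakDual 𝕜 E, weakDualMap s.subtypeL g = h ∧ ∀ x ∈ I, g x = φ x := by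
  have hφ_cont : Continuous (φ.domRestrict s) :=
    (WeakDual.toStrongDual h).continuous.congr fun z => (hφ z).symm
  obtain ⟨g, hg⟩ := exists_strongDual_eqOn_sup_of_finiteDimensional hs
    (Submodule.span 𝕜 (I : Set E)) hφ_cont
  refine ⟨StrongDual.toWeakDual g, ?_, fun x hx => ?_⟩
  · exact DFunLike.ext _ _ fun z : s => (hg z (Submodule.mem_sup_right z.2)).trans (hφ z)
  · exact hg x (Submodule.mem_sup_left (Submodule.subset_span hx))

theorem isOpenMap_weakDualMap_subtypeL (hs : IsClosed (s : Set E)) :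
    IsOpenMap (weakDualMap s.subtypeL) := by
  refine isOpenMap_iff_nhds_le.2 fun f V hV => ?_
  have h_inducing : IsInducing fun (f : WeakDual 𝕜 E) (x : E) => f x := ⟨rfl⟩
  rw [Filter.mem_map, h_inducing.nhds_eq_comap, Filter.mem_comap] at hV
  obtain ⟨U, hU, hUV⟩ := hV
  obtain ⟨I, t, ht, htU⟩ := Filter.mem_pi'.1 (nhds_pi.ge hU)
  obtain ⟨P, hP⟩ := s.subtype.exists_leftInverse_of_injective s.ker_subtype
  let f₀ : WeakDual 𝕜 s := weakDualMap s.subtypeL f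
  have h_near : ∀ᶠ h : WeakDual 𝕜 s in 𝓝 f₀, ∀ x ∈ I, f x + (h (P x) - f₀ (P x)) ∈ t x := by
    refine (Filter.eventually_all_finset I).2 fun x _ => ?_
    have h_cont : Continuous fun h : WeakDual 𝕜 s => f x + (h (P x) - f₀ (P x)) :=
      continuous_const.add ((WeakDual.eval_continuous (P x)).sub continuous_const)
    exact h_cont.tendsto' f₀ (f x) (by rw [sub_self, add_zero]) (ht x)
  filter_upwards [h_near] with h h_mem
  let φ : E →ₗ[𝕜] 𝕜 := (WeakDual.toStrongDual f).toLinearMap +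
    (WeakDual.toStrongDual h - WeakDual.toStrongDual f₀).toLinearMap ∘ₗ P
  have hφ (z : s) : φ z = h z := by
    have hPz : P z = z := LinearMap.congr_fun hP z
    change f z + (h (P z) - f (P z)) = h z
    rw [hPz, add_sub_cancel]
  obtain ⟨g, rfl, hg⟩ := exists_weakDualMap_subtypeL_eq_and_eqOn_finset hs I hφ
  have hg_mem (x : E) (hx : x ∈ I) : g x ∈ t x := by
    rw [hg x hx]
    exact h_mem x hx
  exact hUV (htU hg_mem)

end WeakDual

section WeakStarDerivedSet

variable {X Y : Type*} [NormedAddCommGroup X] [NormedSpace ℝ X] [NormedAddCommGroup Y]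
  [NormedSpace ℝ Y]

theorem mem_wStarDerived {A : Set (StrongDual ℝ X)} {f : StrongDual ℝ X} :
    f ∈ wStarDerived A ↔ ∃ n : ℕ, StrongDual.toWeakDual f ∈
      closure (StrongDual.toWeakDual '' (A ∩ {g : StrongDual ℝ X | ‖g‖ ≤ n})) :=
  Set.mem_iUnion

theorem mem_wStarClosure {A : Set (StrongDual ℝ X)} {f : StrongDual ℝ X} :
    f ∈ wStarClosure A ↔ StrongDual.toWeakDual f ∈ closure (StrongDual.toWeakDual '' A) :=
  Iff.rfl

theorem wStarDerived_subset_wStarClosure (A : Set (StrongDual ℝ X)) :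
    wStarDerived A ⊆ wStarClosure A := by
  intro f hf
  obtain ⟨n, hn⟩ := mem_wStarDerived.1 hf
  exact mem_wStarClosure.2 (closure_mono (Set.image_mono Set.inter_subset_left) hn)

theorem mapsTo_comp_wStarDerived (T : Y →L[ℝ] X) {A : Set (StrongDual ℝ X)}
    {B : Set (StrongDual ℝ Y)} (h : Set.MapsTo (·.comp T) A B) :
    Set.MapsTo (·.comp T) (wStarDerived A) (wStarDerived B) := by
  intro f hf
  obtain ⟨n, hn⟩ := mem_wStarDerived.1 hf
  refine mem_wStarDerived.2 ⟨n * ⌈‖T‖⌉₊,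
    map_mem_closure (f := weakDualMap T) (weakDualMap T).continuous hn ?_⟩
  rintro _ ⟨g, ⟨hgA, hgn⟩, rfl⟩
  have hg_norm : ‖g.comp T‖ ≤ (n * ⌈‖T‖⌉₊ : ℕ) :=
    calc
      ‖g.comp T‖ ≤ ‖g‖ * ‖T‖ := g.opNorm_comp_le T
      _ ≤ n * ⌈‖T‖⌉₊ := by gcongr; exacts [hgn, Nat.le_ceil _]
      _ = (n * ⌈‖T‖⌉₊ : ℕ) := (Nat.cast_mul _ _).symm
  exact ⟨g.comp T, ⟨h hgA, hg_norm⟩, rfl⟩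

variable (Z : Submodule ℝ X)

theorem restrictMap_surjective : Function.Surjective (restrictMap Z) := fun h =>
  (StrongDual.exists_extension Z h).imp fun _ hg => ContinuousLinearMap.ext hg

theorem wStarClosure_preimage_restrictMap (hZ : IsClosed (Z : Set X)) (A : Set (StrongDual ℝ Z)) :
    wStarClosure (restrictMap Z ⁻¹' A) = restrictMap Z ⁻¹' wStarClosure A := by
  have h_image : StrongDual.toWeakDual '' (restrictMap Z ⁻¹' A) =
      weakDualMap Z.subtypeL ⁻¹' (StrongDual.toWeakDual '' A) := by
    simp only [LinearEquiv.image_eq_preimage_symm]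
    rfl
  ext f
  rw [mem_wStarClosure, h_image,
    ← (isOpenMap_weakDualMap_subtypeL hZ).preimage_closure_eq_closure_preimage
      (weakDualMap Z.subtypeL).continuous]
  rfl

theorem stmt9_general (hZ : IsClosed (Z : Set X)) (A : Set (StrongDual ℝ Z))
    (h : wStarDerived A ⊂ wStarClosure A) :
    wStarDerived (restrictMap Z ⁻¹' A) ⊂ wStarClosure (restrictMap Z ⁻¹' A) := by
  obtain ⟨a, ha_closure, ha_derived⟩ := Set.exists_of_ssubset h
  obtain ⟨f, rfl⟩ := restrictMap_surjective Z a
  have hf_closure : f ∈ wStarClosure (restrictMap Z ⁻¹' A) := by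
    rwa [wStarClosure_preimage_restrictMap Z hZ A]
  have hf_derived : f ∉ wStarDerived (restrictMap Z ⁻¹' A) := fun hf =>
    ha_derived (mapsTo_comp_wStarDerived Z.subtypeL (Set.mapsTo_preimage _ A) hf)
  exact (Set.ssubset_iff_of_subset (wStarDerived_subset_wStarClosure _)).2
    ⟨f, hf_closure, hf_derived⟩

end WeakStarDerivedSet

/-- For a closed subspace $Z \subset X$, $A \subset Z^*$ and $D = (E^*)^{-1}(A)$:
if $A^{(1)} \subsetneq \overline{A}^*$ in $Z^*$ then $D^{(1)} \subsetneq \overline{D}^*$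
in $X^*$. -/
theorem stmt9 (X : Type*) [NormedAddCommGroup X] [NormedSpace ℝ X] [CompleteSpace X]
    (Z : Submodule ℝ X) (hZ : IsClosed (Z : Set X)) (A : Set (StrongDual ℝ Z))
    (h : wStarDerived A ⊂ wStarClosure A) :
    wStarDerived (restrictMap Z ⁻¹' A) ⊂ wStarClosure (restrictMap Z ⁻¹' A) :=
  stmt9_general Z hZ A h
end

section
/- Let Z be a real Banach space with a Schauder basis (z_i)_{i≥0} consisting of norm-one vectors such that the partial sums ∑_{i=1}^{k} z_i, k ≥ 1, are uniformly bounded in norm, and let (z_i*) ⊆ Z* be the biorthogonal coordinate functionals. Let (α_j)_{j≥1} be a strictly increasing sequence of positive reals with limit 1, let (β_j)_{j≥1} be a strictly increasing sequence of positive reals with limit ∞, and let (ℕ_j)_{j≥1} be pairwise disjoint infinite subsets of ℕ. Let A ⊆ Z* be the convex hull of the set { α_j z_0* + β_j z_k* : j ≥ 1, k ∈ ℕ_j }. Then for every j ≥ 1 the functional α_j z_0* belongs to the weak* derived set A^(1). -/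
open NormedSpace

/-! The terms of a convergent series tend to zero and `‖z k‖` stays away from zero, so `zstar` is
weak*-null. Hence `α j • zstar 0 + β j • zstar k` converges weak* to `α j • zstar 0` as `k` runs
through `N j`, and by the Banach–Steinhaus theorem this sequence in `A` is norm bounded. -/

open Filter Topology

theorem tendsto_zero_of_tendsto_sum_range {G : Type*} [AddCommGroup G] [TopologicalSpace G]
    [IsTopologicalAddGroup G] {u : ℕ → G} {s : G}
    (hu : Tendsto (fun n ↦ ∑ i ∈ Finset.range n, u i) atTop (𝓝 s)) :
    Tendsto u atTop (𝓝 0) := by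
  simpa only [Function.comp_def, Finset.sum_range_succ_sub_sum, sub_self] using
    (hu.comp (tendsto_add_atTop_nat 1)).sub hu

theorem tendsto_zero_of_tendsto_smul_zero {ι 𝕜 E : Type*} [NormedField 𝕜]
    [SeminormedAddCommGroup E] [NormedSpace 𝕜 E] {l : Filter ι} {a : ι → 𝕜} {x : ι → E} {c : ℝ}
    (hc : 0 < c) (hx : ∀ i, c ≤ ‖x i‖) (hax : Tendsto (fun i ↦ a i • x i) l (𝓝 0)) :
    Tendsto a l (𝓝 0) := by
  have hbound : ∀ i, ‖a i‖ ≤ ‖a i • x i‖ / c := fun i ↦ by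
    rw [le_div_iff₀ hc, norm_smul]
    gcongr
    exact hx i
  exact squeeze_zero_norm hbound (by simpa using hax.norm.div_const c)

theorem exists_norm_le_of_tendsto_apply {𝕜 𝕜₂ E F : Type*} [NontriviallyNormedField 𝕜]
    [NontriviallyNormedField 𝕜₂] {σ : 𝕜 →+* 𝕜₂} [RingHomIsometric σ]
    [SeminormedAddCommGroup E] [NormedSpace 𝕜 E] [CompleteSpace E]
    [SeminormedAddCommGroup F] [NormedSpace 𝕜₂ F]
    {g : ℕ → E →SL[σ] F} {f : E → F} (hg : ∀ x, Tendsto (fun k ↦ g k x) atTop (𝓝 (f x))) :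
    ∃ C, ∀ k, ‖g k‖ ≤ C := by
  refine banach_steinhaus fun x ↦ ?_
  obtain ⟨C, hC⟩ := (hg x).norm.bddAbove_range
  exact ⟨C, fun k ↦ hC ⟨k, rfl⟩⟩

section WeakStarDerived

variable {X : Type*} [NormedAddCommGroup X] [NormedSpace ℝ X] {A : Set (StrongDual ℝ X)}
  {f : StrongDual ℝ X}

theorem mem_wStarDerived_of_tendsto_of_norm_le {ι : Type*} {l : Filter ι}
    {g : ι → StrongDual ℝ X} {C : ℝ} (hg : ∀ x, Tendsto (fun i ↦ g i x) l (𝓝 (f x)))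
    (hgA : ∃ᶠ i in l, g i ∈ A ∧ ‖g i‖ ≤ C) : f ∈ wStarDerived A := by
  obtain ⟨n, hn⟩ := exists_nat_ge C
  have hweak : Tendsto (fun i ↦ StrongDual.toWeakDual (g i)) l (𝓝 (StrongDual.toWeakDual f)) :=
    tendsto_iff_forall_eval_tendsto_topDualPairing.2 hg
  refine Set.mem_iUnion.2 ⟨n, mem_closure_of_frequently_of_tendsto (X := WeakDual ℝ X) ?_ hweak⟩
  exact hgA.mono fun i hi ↦ Set.mem_image_of_mem _ ⟨hi.1, hi.2.trans hn⟩

theorem mem_wStarDerived_of_tendsto [CompleteSpace X] {g : ℕ → StrongDual ℝ X}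
    (hg : ∀ x, Tendsto (fun k ↦ g k x) atTop (𝓝 (f x))) (hgA : ∃ᶠ k in atTop, g k ∈ A) :
    f ∈ wStarDerived A := by
  obtain ⟨C, hC⟩ := exists_norm_le_of_tendsto_apply hg
  exact mem_wStarDerived_of_tendsto_of_norm_le hg (hgA.mono fun k hk ↦ ⟨hk, hC k⟩)

end WeakStarDerived

theorem stmt10_general {Z ι : Type*} [NormedAddCommGroup Z] [NormedSpace ℝ Z] [CompleteSpace Z]
    {z : ℕ → Z} {zstar : ℕ → StrongDual ℝ Z}
    (hexp : ∀ w : Z, Tendsto (fun k ↦ ∑ i ∈ Finset.range k, zstar i w • z i) atTop (𝓝 w))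
    {c : ℝ} (hc : 0 < c) (hz : ∀ i, c ≤ ‖z i‖) (α β : ι → ℝ) {N : ι → Set ℕ} {j : ι}
    (hN : (N j).Infinite) :
    α j • zstar 0 ∈ wStarDerived (convexHull ℝ
      {f : StrongDual ℝ Z | ∃ i k, k ∈ N i ∧ f = α i • zstar 0 + β i • zstar k}) := by
  have hnull (w : Z) : Tendsto (fun k ↦ zstar k w) atTop (𝓝 0) :=
    tendsto_zero_of_tendsto_smul_zero hc hz (tendsto_zero_of_tendsto_sum_range (hexp w))
  have hlim (w : Z) : Tendsto (fun k ↦ (α j • zstar 0 + β j • zstar k) w) atTop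
      (𝓝 ((α j • zstar 0) w)) := by
    simpa using ((hnull w).const_mul (β j)).const_add (α j * zstar 0 w)
  refine mem_wStarDerived_of_tendsto hlim ?_
  exact (Nat.frequently_atTop_iff_infinite.2 hN).mono fun k hk ↦
    subset_convexHull ℝ _ ⟨j, k, hk, rfl⟩

/-- For a Banach space $Z$ with a normalized Schauder basis $(z_i)$ whose partial sums
$\sum_{i=1}^k z_i$ are uniformly bounded, and $A$ the convex hull of
$\{\alpha_j z_0^* + \beta_j z_k^* : j \ge 1, k \in \mathbb{N}_j\}$, each $\alpha_j z_0^*$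
belongs to the weak* derived set $A^{(1)}$. -/
theorem stmt10 (Z : Type*) [NormedAddCommGroup Z] [NormedSpace ℝ Z] [CompleteSpace Z]
    (z : ℕ → Z) (zstar : ℕ → StrongDual ℝ Z)
    (hbi : ∀ i j, zstar i (z j) = if i = j then 1 else 0)
    (hexp : ∀ w : Z, Filter.Tendsto (fun k => ∑ i ∈ Finset.range k, zstar i w • z i)
      Filter.atTop (nhds w))
    (hnorm : ∀ i, ‖z i‖ = 1)
    (hps : ∃ M : ℝ, ∀ k : ℕ, 1 ≤ k → ‖∑ i ∈ Finset.Icc 1 k, z i‖ ≤ M)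
    (α β : ℕ → ℝ)
    (hαmono : StrictMono α) (hαpos : ∀ j, 0 < α j)
    (hα1 : Filter.Tendsto α Filter.atTop (nhds 1))
    (hβmono : StrictMono β) (hβpos : ∀ j, 0 < β j)
    (hβ : Filter.Tendsto β Filter.atTop Filter.atTop)
    (N : ℕ → Set ℕ) (hNdisj : Pairwise (Function.onFun Disjoint N))
    (hNinf : ∀ j, (N j).Infinite) (hN0 : ∀ j, 0 ∉ N j)
    (A : Set (StrongDual ℝ Z))
    (hA : A = convexHull ℝ
      {f : StrongDual ℝ Z | ∃ j k : ℕ, k ∈ N j ∧ f = α j • zstar 0 + β j • zstar k}) :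
    ∀ j : ℕ, α j • zstar 0 ∈ wStarDerived A := by
  subst hA
  exact fun j ↦ stmt10_general hexp one_pos (fun i ↦ (hnorm i).ge) α β (hNinf j)
end

section
/- Let U be a real Banach space with a Schauder basis (u_i)_{i≥0} whose biorthogonal coordinate functionals (u_i*) ⊆ U* are uniformly bounded in norm, and let (c_i)_{i≥0} be a sequence of nonnegative reals with ∑_{i=0}^∞ c_i < ∞. Then the set T = { u* ∈ U* : |u*(u_i)| ≤ c_i for all i ≥ 0 } is norm-compact in U*. -/
open NormedSpace

/-!
Applying `f : StrongDual ℝ U` to the expansion of `w` gives `f w = ∑ i, f (u i) * ustar i w`. If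
`|f (u i)| ≤ c i` for all `i`, the series `∑ i, f (u i) • ustar i` converges absolutely in the dual,
so its sum is `f`. Hence `T` lies in the image of the product `∏ i, [-c i, c i]` under
`a ↦ ∑' i, a i • ustar i`. The product is compact by Tychonoff's theorem, and the map is continuous
on it by the Weierstrass M-test, so `T` is a closed subset of a compact set.
-/

open Filter Metric Set

theorem norm_smul_le_of_norm_le {𝕜 F : Type*} [NormedField 𝕜] [SeminormedAddCommGroup F]
    [NormedSpace 𝕜 F] {a : 𝕜} {r : ℝ} (ha : ‖a‖ ≤ r) (x : F) : ‖a • x‖ ≤ r * ‖x‖ :=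
  (norm_smul_le a x).trans (mul_le_mul_of_nonneg_right ha (norm_nonneg x))

theorem summable_mul_norm_of_norm_le {ι F : Type*} [SeminormedAddCommGroup F] {c : ι → ℝ}
    {x : ι → F} {C : ℝ} (hc : Summable c) (hx : ∀ i, ‖x i‖ ≤ C) :
    Summable fun i => c i * ‖x i‖ := by
  refine .of_norm_bounded (hc.abs.mul_right C) fun i => ?_
  rw [norm_mul, norm_norm, Real.norm_eq_abs]
  exact mul_le_mul_of_nonneg_left (hx i) (abs_nonneg (c i))

theorem hasSum_conditional_nat_iff {M : Type*} [AddCommMonoid M] [TopologicalSpace M] {f : ℕ → M}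
    {a : M} : HasSum f a (.conditional ℕ) ↔
      Tendsto (fun n => ∑ i ∈ Finset.range n, f i) atTop (nhds a) := by
  rw [HasSum, SummationFilter.conditional_filter_eq_map_range, tendsto_map'_iff, Function.comp_def]

section BoundedCoefficients

variable {ι 𝕜 F : Type*} [NormedField 𝕜] [NormedAddCommGroup F] [NormedSpace 𝕜 F] [CompleteSpace F]
  {c : ι → ℝ} {x : ι → F}

theorem summable_smul_of_norm_le (hcx : Summable fun i => c i * ‖x i‖) {a : ι → 𝕜}
    (ha : ∀ i, ‖a i‖ ≤ c i) : Summable fun i => a i • x i :=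
  .of_norm_bounded hcx fun i => norm_smul_le_of_norm_le (ha i) (x i)

theorem continuousOn_tsum_smul_pi_closedBall (hcx : Summable fun i => c i * ‖x i‖) :
    ContinuousOn (fun a : ι → 𝕜 => ∑' i, a i • x i) (univ.pi fun i => closedBall 0 (c i)) :=
  continuousOn_tsum (fun i => by fun_prop) hcx fun i _ ha =>
    norm_smul_le_of_norm_le (mem_closedBall_zero_iff.mp (ha i (mem_univ i))) (x i)

theorem isCompact_image_tsum_smul_pi_closedBall [ProperSpace 𝕜]
    (hcx : Summable fun i => c i * ‖x i‖) :
    IsCompact ((fun a : ι → 𝕜 => ∑' i, a i • x i) '' univ.pi fun i => closedBall 0 (c i)) :=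
  (isCompact_univ_pi fun i => isCompact_closedBall 0 (c i)).image_of_continuousOn
    (continuousOn_tsum_smul_pi_closedBall hcx)

end BoundedCoefficients

section Dual

variable {ι 𝕜 E : Type*} [NontriviallyNormedField 𝕜] [NormedAddCommGroup E] [NormedSpace 𝕜 E]

theorem isClosed_setOf_forall_norm_apply_le (u : ι → E) (c : ι → ℝ) :
    IsClosed {f : StrongDual 𝕜 E | ∀ i, ‖f (u i)‖ ≤ c i} := by
  simp only [ofPred_forall]
  exact isClosed_iInter fun i => isClosed_le (by fun_prop) continuous_const

variable {L : SummationFilter ι} [L.NeBot] [L.LeAtTop] {u : ι → E} {ustar : ι → StrongDual 𝕜 E}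

theorem tsum_apply_smul_eq_self_of_hasSum (hexp : ∀ w, HasSum (fun i => ustar i w • u i) w L)
    {f : StrongDual 𝕜 E} (hf : Summable fun i => f (u i) • ustar i) :
    ∑' i, f (u i) • ustar i = f := by
  ext w
  have series_apply : HasSum (fun i => f (u i) * ustar i w) ((∑' i, f (u i) • ustar i) w) L :=
    (hf.hasSum.mapL (ContinuousLinearMap.apply 𝕜 𝕜 w)).mono_left L.le_atTop
  have expansion_apply : HasSum (fun i => f (u i) * ustar i w) (f w) L := by
    simpa only [map_smul, smul_eq_mul, mul_comm] using (hexp w).mapL f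
  exact series_apply.unique expansion_apply

theorem stmt12_general [ProperSpace 𝕜] (hexp : ∀ w, HasSum (fun i => ustar i w • u i) w L)
    {c : ι → ℝ} (hsum : Summable fun i => c i * ‖ustar i‖) :
    IsCompact {f : StrongDual 𝕜 E | ∀ i, ‖f (u i)‖ ≤ c i} := by
  refine (isCompact_image_tsum_smul_pi_closedBall (𝕜 := 𝕜) hsum).of_isClosed_subset
    (isClosed_setOf_forall_norm_apply_le u c) fun f hf => ?_
  exact ⟨fun i => f (u i), fun i _ => mem_closedBall_zero_iff.mpr (hf i),
    tsum_apply_smul_eq_self_of_hasSum hexp (summable_smul_of_norm_le hsum hf)⟩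

end Dual

/-- If $U$ has a Schauder basis $(u_i)$ with uniformly bounded coordinate functionals and
$\sum_i c_i < \infty$ with $c_i \ge 0$, then
$T = \{u^* \in U^* : |u^*(u_i)| \le c_i \text{ for all } i\}$ is norm-compact. -/
theorem stmt12 (U : Type*) [NormedAddCommGroup U] [NormedSpace ℝ U] [CompleteSpace U]
    (u : ℕ → U) (ustar : ℕ → StrongDual ℝ U)
    (hbi : ∀ i j, ustar i (u j) = if i = j then 1 else 0)
    (hexp : ∀ w : U, Filter.Tendsto (fun k => ∑ i ∈ Finset.range k, ustar i w • u i)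
      Filter.atTop (nhds w))
    (hbdd : ∃ C : ℝ, ∀ i, ‖ustar i‖ ≤ C)
    (c : ℕ → ℝ) (hc : ∀ i, 0 ≤ c i) (hsum : Summable c) :
    IsCompact {f : StrongDual ℝ U | ∀ i, |f (u i)| ≤ c i} := by
  obtain ⟨C, hC⟩ := hbdd
  exact stmt12_general (fun w => hasSum_conditional_nat_iff.mpr (hexp w))
    (summable_mul_norm_of_norm_le hsum hC)
end

section
/- Let Z be a closed linear subspace of a real Banach space X, let E* : X* → Z* be the restriction map, let A ⊆ X* be a linear subspace, and suppose there is a norm-compact set K ⊆ Z* such that E*(A ∩ B_{X*}) ⊆ K. Then E*(A^(1)) is contained in the closed linear span of K in Z*. In particular, if Z* is not separable, then A^(1) is not norm-dense in X*. -/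
open NormedSpace

/-!
Let `T* : X* → Y*` be the adjoint of `T : Y → X` (restriction to `Z` is the case of an inclusion)
and `B` the unit ball of `X*`. Scaling turns `T* (A ∩ B) ⊆ K` into `T* (A ∩ n B) ⊆ (n + 1) K`.
Since `T*` is weak*-to-weak* continuous and `(n + 1) K` is weak*-closed, the inclusion survives
passing to the weak* closure of `A ∩ n B`, so `T* (A^(1))` lies in the span of `K` even before
taking norm closures. If `A^(1)` is norm-dense and `T*` has dense range (by Hahn–Banach,
restriction is even onto), then `Y*` is the closed linear span of a separable set.
-/

section AdjointImages

open scoped Pointwise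

lemma iUnion_smul_subset_span {ι R M : Type*} [Semiring R] [AddCommMonoid M] [Module R M]
    (c : ι → R) (K : Set M) : ⋃ i, c i • K ⊆ (Submodule.span R K : Set M) := by
  refine Set.iUnion_subset fun i => ?_
  rintro _ ⟨k, hk, rfl⟩
  exact Submodule.smul_mem _ _ (Submodule.subset_span hk)

lemma starConvex_inter_norm_le_subset_smul {E : Type*} [SeminormedAddCommGroup E]
    [NormedSpace ℝ E] {A : Set E} (hA : StarConvex ℝ 0 A) {r : ℝ} (hr : 1 ≤ r) :
    A ∩ {x | ‖x‖ ≤ r} ⊆ r • (A ∩ {x | ‖x‖ ≤ 1}) := by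
  rintro x ⟨hxA, hxr⟩
  have hpos : 0 < r := zero_lt_one.trans_le hr
  rw [Set.mem_smul_set_iff_inv_smul_mem₀ hpos.ne']
  refine ⟨hA.smul_mem hxA (inv_nonneg.2 hpos.le) (inv_le_one_of_one_le₀ hr), ?_⟩
  rw [Set.mem_ofPred_eq, norm_smul, norm_inv, Real.norm_of_nonneg hpos.le]
  exact inv_mul_le_one_of_le₀ hxr hpos.le

variable {X Y : Type*} [NormedAddCommGroup X] [NormedSpace ℝ X]
  [NormedAddCommGroup Y] [NormedSpace ℝ Y]

lemma wStarClosure_mono {A B : Set (StrongDual ℝ X)} (h : A ⊆ B) :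
    wStarClosure A ⊆ wStarClosure B :=
  Set.preimage_mono (closure_mono (Set.image_mono h))

lemma wStarClosure_eq_self_of_isClosed {K : Set (StrongDual ℝ X)}
    (hK : IsClosed (StrongDual.toWeakDual '' K)) : wStarClosure K = K := by
  rw [wStarClosure, hK.closure_eq]
  exact Set.preimage_image_eq K StrongDual.toWeakDual.injective

lemma isClosed_toWeakDual_image_of_isCompact {K : Set (StrongDual ℝ X)} (hK : IsCompact K) :
    IsClosed (StrongDual.toWeakDual '' K) :=
  (hK.image NormedSpace.Dual.toWeakDual_continuous).isClosed

-- For the dual of a coerced submodule, instance search does not find `PseudoMetrizableSpace`;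
-- for the dual of a space that is a variable it does.
lemma isSeparable_of_isCompact_strongDual {K : Set (StrongDual ℝ X)} (hK : IsCompact K) :
    TopologicalSpace.IsSeparable K :=
  hK.isSeparable

lemma isClosed_toWeakDual_image_smul {K : Set (StrongDual ℝ X)}
    (hK : IsClosed (StrongDual.toWeakDual '' K)) {c : ℝ} (hc : c ≠ 0) :
    IsClosed (StrongDual.toWeakDual '' (c • K)) := by
  rw [image_smul_set]
  exact hK.smul_of_ne_zero hc

lemma precomp_image_wStarClosure_subset (T : Y →L[ℝ] X) (A : Set (StrongDual ℝ X)) :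
    ContinuousLinearMap.precomp ℝ T '' wStarClosure A ⊆
      wStarClosure (ContinuousLinearMap.precomp ℝ T '' A) := by
  rintro _ ⟨f, hf, rfl⟩
  have hcont : Continuous fun g : WeakDual ℝ X =>
      StrongDual.toWeakDual (ContinuousLinearMap.precomp ℝ T (WeakDual.toStrongDual g)) :=
    WeakDual.continuous_of_continuous_eval fun y => WeakDual.eval_continuous (T y)
  refine Set.MapsTo.closure ?_ hcont hf
  rintro _ ⟨g, hg, rfl⟩
  exact Set.mem_image_of_mem _ (Set.mem_image_of_mem _ hg)

lemma precomp_image_wStarDerived_subset_iUnion_smul (T : Y →L[ℝ] X) {A : Set (StrongDual ℝ X)}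
    (hA : StarConvex ℝ 0 A) {K : Set (StrongDual ℝ Y)}
    (hK : IsClosed (StrongDual.toWeakDual '' K))
    (hsub : ContinuousLinearMap.precomp ℝ T '' (A ∩ {g | ‖g‖ ≤ 1}) ⊆ K) :
    ContinuousLinearMap.precomp ℝ T '' wStarDerived A ⊆ ⋃ n : ℕ, ((n : ℝ) + 1) • K := by
  rintro _ ⟨f, hf, rfl⟩
  obtain ⟨n, hn : f ∈ wStarClosure (A ∩ {g | ‖g‖ ≤ n})⟩ := Set.mem_iUnion.1 hf
  have hscaled : ContinuousLinearMap.precomp ℝ T '' (A ∩ {g | ‖g‖ ≤ n}) ⊆ ((n : ℝ) + 1) • K :=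
    calc ContinuousLinearMap.precomp ℝ T '' (A ∩ {g | ‖g‖ ≤ n})
      _ ⊆ ContinuousLinearMap.precomp ℝ T '' (((n : ℝ) + 1) • (A ∩ {g | ‖g‖ ≤ 1})) := by
        refine Set.image_mono (Set.Subset.trans ?_
          (starConvex_inter_norm_le_subset_smul hA (by simp)))
        exact Set.inter_subset_inter_right A fun g (hg : ‖g‖ ≤ n) => hg.trans (by simp)
      _ = ((n : ℝ) + 1) • ContinuousLinearMap.precomp ℝ T '' (A ∩ {g | ‖g‖ ≤ 1}) :=
        image_smul_set _ _ _
      _ ⊆ ((n : ℝ) + 1) • K := Set.smul_set_mono hsub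
  have hclosed := isClosed_toWeakDual_image_smul hK (Nat.cast_add_one_ne_zero (R := ℝ) n)
  refine Set.mem_iUnion.2 ⟨n, ?_⟩
  rw [← wStarClosure_eq_self_of_isClosed hclosed]
  exact wStarClosure_mono hscaled
    (precomp_image_wStarClosure_subset T _ (Set.mem_image_of_mem _ hn))

end AdjointImages

lemma separableSpace_of_dense_span {R M : Type*} [Semiring R] [TopologicalSpace R]
    [TopologicalSpace.SeparableSpace R] [AddCommMonoid M] [Module R M] [TopologicalSpace M]
    [ContinuousAdd M] [ContinuousSMul R M]
    {K : Set M} (hK : TopologicalSpace.IsSeparable K)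
    (hd : Dense (Submodule.span R K : Set M)) : TopologicalSpace.SeparableSpace M := by
  rw [← TopologicalSpace.isSeparable_univ_iff, ← hd.closure_eq]
  exact (hK.span (R := R)).closure

lemma restrictMap_surjective_s14 {X : Type*} [NormedAddCommGroup X] [NormedSpace ℝ X]
    (Z : Submodule ℝ X) : Function.Surjective (restrictMap Z) := by
  intro g
  obtain ⟨f, hf, -⟩ := exists_extension_norm_eq Z g
  exact ⟨f, ContinuousLinearMap.ext hf⟩

theorem stmt14_general {X Y : Type*} [NormedAddCommGroup X] [NormedSpace ℝ X]
    [NormedAddCommGroup Y] [NormedSpace ℝ Y] (T : Y →L[ℝ] X)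
    {A : Set (StrongDual ℝ X)} (hA : StarConvex ℝ 0 A) {K : Set (StrongDual ℝ Y)}
    (hKc : IsClosed (StrongDual.toWeakDual '' K)) (hKs : TopologicalSpace.IsSeparable K)
    (hsub : ContinuousLinearMap.precomp ℝ T '' (A ∩ {g | ‖g‖ ≤ 1}) ⊆ K) :
    ContinuousLinearMap.precomp ℝ T '' wStarDerived A ⊆
      (Submodule.span ℝ K : Set (StrongDual ℝ Y)) ∧
    (DenseRange (ContinuousLinearMap.precomp ℝ T : StrongDual ℝ X → StrongDual ℝ Y) →
      ¬ TopologicalSpace.SeparableSpace (StrongDual ℝ Y) → ¬ Dense (wStarDerived A)) := by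
  have hspan := (precomp_image_wStarDerived_subset_iUnion_smul T hA hKc hsub).trans
    (iUnion_smul_subset_span _ K)
  refine ⟨hspan, fun hT hns hd => hns (separableSpace_of_dense_span (R := ℝ) hKs ?_)⟩
  exact (hT.dense_image (ContinuousLinearMap.precomp ℝ T).continuous hd).mono hspan

/-- If $A \subset X^*$ is a linear subspace, $Z \subset X$ a closed subspace, and
$E^*(A \cap B_{X^*})$ is contained in a norm-compact set $K \subset Z^*$, then
$E^*(A^{(1)})$ is contained in the closed linear span of $K$; in particular if $Z^*$
is not separable then $A^{(1)}$ is not norm-dense in $X^*$. -/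
theorem stmt14 (X : Type*) [NormedAddCommGroup X] [NormedSpace ℝ X] [CompleteSpace X]
    (Z : Submodule ℝ X) (hZ : IsClosed (Z : Set X))
    (A : Submodule ℝ (StrongDual ℝ X)) (K : Set (StrongDual ℝ Z)) (hK : IsCompact K)
    (hsub : restrictMap Z '' ((A : Set (StrongDual ℝ X)) ∩ {g : StrongDual ℝ X | ‖g‖ ≤ 1}) ⊆ K) :
    restrictMap Z '' wStarDerived (A : Set (StrongDual ℝ X)) ⊆
      closure (Submodule.span ℝ K : Set (StrongDual ℝ Z)) ∧
    (¬ TopologicalSpace.SeparableSpace (StrongDual ℝ Z) →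
      ¬ Dense (wStarDerived (A : Set (StrongDual ℝ X)))) := by
  obtain ⟨hspan, hdense⟩ := stmt14_general Z.subtypeL A.starConvex
    (isClosed_toWeakDual_image_of_isCompact hK) (isSeparable_of_isCompact_strongDual hK) hsub
  exact ⟨hspan.trans subset_closure, hdense (restrictMap_surjective_s14 Z).denseRange⟩
end
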